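/- arXiv:math/0010259 — 3 statements merged into one kernel-verified Lean document; each statement's English description precedes it below -/
import Mathlib

section
/- For every λ ∈ ℂ, every p ≥ 1, every φ ∈ ℂ[u_1,…,u_n] ⊆ A, and every ψ ∈ ℂ[ξ_1,…,ξ_n] ⊆ A, one has C^λ_p(φ,ψ) = g^λ_p(E)(D^p(φ·ψ)); that is, on such pairs the Lecomte–Ovsienko star product is given by φ ⋆_λ ψ = Σ_{p≥0} bg^λ_p(φψ) t^p. -/
open MvPolynomial

/-- The polynomial symbol algebra `A = ℂ[u₁,…,uₙ,ξ₁,…,ξₙ]`: variables `Sum.inl i` are the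
`uᵢ` and variables `Sum.inr i` are the `ξᵢ`. -/
abbrev PolA (n : ℕ) := MvPolynomial (Fin n ⊕ Fin n) ℂ

namespace LO

/-- ξ-degree of a monomial exponent. -/
def xiDeg {n : ℕ} (d : (Fin n ⊕ Fin n) →₀ ℕ) : ℕ :=
  ∑ i : Fin n, d (Sum.inr i)

/-- `c(E)`: the operator multiplying the ξ-degree-`m` component by `c m`. -/
noncomputable def cE {n : ℕ} (c : ℕ → ℂ) (φ : PolA n) : PolA n :=
  ∑ d ∈ φ.support, monomial d (c (xiDeg d) * coeff d φ)

/-- `D = Σᵢ ∂²/∂uᵢ∂ξᵢ`. -/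
noncomputable def Dop {n : ℕ} (φ : PolA n) : PolA n :=
  ∑ i : Fin n, pderiv (Sum.inl i) (pderiv (Sum.inr i) φ)

/-- The scalar `h^λ_d(m)`. -/
noncomputable def hScal (n : ℕ) (lam : ℂ) (d m : ℕ) : ℂ :=
  (d.factorial : ℂ)⁻¹ *
    ∏ j ∈ Finset.range d,
      ((m : ℂ) + (j : ℂ) + lam * ((n : ℂ) + 1)) /
        (2 * (m : ℂ) + (j : ℂ) + (n : ℂ) + (d : ℂ))

/-- The scalar `g^λ_d(m)`. -/
noncomputable def gScal (n : ℕ) (lam : ℂ) (d m : ℕ) : ℂ :=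
  (d.factorial : ℂ)⁻¹ *
    ∏ j ∈ Finset.range d,
      (-(m : ℂ) - (j : ℂ) - lam * ((n : ℂ) + 1)) /
        (2 * (m : ℂ) + (j : ℂ) + (n : ℂ) + 1)

/-- `bh^λ_d = h^λ_d(E) ∘ D^d` (equal to the identity for `d = 0`). -/
noncomputable def bh {n : ℕ} (lam : ℂ) (d : ℕ) (φ : PolA n) : PolA n :=
  cE (hScal n lam d) (Dop^[d] φ)

/-- `bg^λ_d = g^λ_d(E) ∘ D^d` (equal to the identity for `d = 0`). -/
noncomputable def bg {n : ℕ} (lam : ℂ) (d : ℕ) (φ : PolA n) : PolA n :=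
  cE (gScal n lam d) (Dop^[d] φ)

/-- `N_k(φ,ψ) = (1/k!) Σ_{α ∈ {1,…,n}^k} ∂^kφ/∂ξ_α · ∂^kψ/∂u_α`. -/
noncomputable def Nop {n : ℕ} (k : ℕ) (φ ψ : PolA n) : PolA n :=
  (k.factorial : ℂ)⁻¹ •
    ∑ α : Fin k → Fin n,
      ((List.ofFn α).foldr (fun i acc => pderiv (Sum.inr i) acc) φ) *
      ((List.ofFn α).foldr (fun i acc => pderiv (Sum.inl i) acc) ψ)

/-- The coefficient `C^λ_p` of the Lecomte–Ovsienko star product. -/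
noncomputable def C (n : ℕ) (lam : ℂ) (p : ℕ) (φ ψ : PolA n) : PolA n :=
  ∑ i ∈ Finset.range (p + 1), ∑ j ∈ Finset.range (p + 1),
    ∑ k ∈ Finset.range (p + 1), ∑ m ∈ Finset.range (p + 1),
      if i + j + k + m = p then bg lam m (Nop k (bh lam i φ) (bh lam j ψ)) else 0

/-- The Poisson bracket `{φ,ψ}`. -/
noncomputable def pb {n : ℕ} (φ ψ : PolA n) : PolA n :=
  ∑ i : Fin n,
    (pderiv (Sum.inr i) φ * pderiv (Sum.inl i) ψ
      - pderiv (Sum.inl i) φ * pderiv (Sum.inr i) ψ)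

/-- `φ ∈ A^m` (ξ-homogeneous of degree `m`; for `m < 0` this forces `φ = 0`). -/
def IsXiHomog {n : ℕ} (m : ℤ) (φ : PolA n) : Prop :=
  ∀ d ∈ φ.support, (xiDeg d : ℤ) = m

/-- The set of spanning momentum functions of the projective `sl_{n+1}(ℝ)`-action. -/
noncomputable def momSet (n : ℕ) : Set (PolA n) :=
  (Set.range fun i : Fin n => (X (Sum.inr i) : PolA n)) ∪
  (Set.range fun ij : Fin n × Fin n =>
    (X (Sum.inl ij.1) * X (Sum.inr ij.2) : PolA n)) ∪
  (Set.range fun i : Fin n =>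
    (X (Sum.inl i) * ∑ k : Fin n, X (Sum.inl k) * X (Sum.inr k) : PolA n))

/-- The span `M` of the momentum functions. -/
noncomputable def momSpan (n : ℕ) : Submodule ℂ (PolA n) := Submodule.span ℂ (momSet n)

/-- The Weyl algebra `W` of differential operators with polynomial coefficients,
as a subalgebra of `End_ℂ(A)`. -/
noncomputable def Weyl (n : ℕ) : Subalgebra ℂ (Module.End ℂ (PolA n)) :=
  Algebra.adjoin ℂ
    ((Set.range fun i : Fin n =>
        (LinearMap.mulLeft ℂ (X (Sum.inl i)) : Module.End ℂ (PolA n))) ∪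
     (Set.range fun i : Fin n =>
        (LinearMap.mulLeft ℂ (X (Sum.inr i)) : Module.End ℂ (PolA n))) ∪
     (Set.range fun v : Fin n ⊕ Fin n =>
        ((pderiv v).toLinearMap : Module.End ℂ (PolA n))))

/-- A bilinear map `B : A × A → A` is bidifferential if it is a finite sum
`B(φ,ψ) = Σ_α A_α(φ)·B_α(ψ)` with `A_α, B_α` in the Weyl algebra. -/
def Bidiff (n : ℕ) (B : PolA n → PolA n → PolA n) : Prop :=
  ∃ (N : ℕ) (Aop Bop : Fin N → Weyl n),
    ∀ φ ψ : PolA n,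
      B φ ψ = ∑ α : Fin N,
        (Aop α : Module.End ℂ (PolA n)) φ * (Bop α : Module.End ℂ (PolA n)) ψ

/-- The scalar by which `T_p = ∏_{i=1}^{⌊p/2⌋}(E'+i)` acts on `A^m`. -/
noncomputable def TScal (n p m : ℕ) : ℂ :=
  ∏ i ∈ Finset.Icc 1 (p / 2), ((m : ℂ) + (n : ℂ) / 2 + (i : ℂ))

/-- The scalar by which `S_p = ∏_{i=1}^{⌊p/2⌋}(E'−i)` acts on `A^m`. -/
noncomputable def SScal (n p m : ℕ) : ℂ :=
  ∏ i ∈ Finset.Icc 1 (p / 2), ((m : ℂ) + (n : ℂ) / 2 - (i : ℂ))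

/-- The operator `T_p`. -/
noncomputable def Tp (n p : ℕ) : PolA n → PolA n := cE (TScal n p)

/-- The operator `S_p`. -/
noncomputable def Sp (n p : ℕ) : PolA n → PolA n := cE (SScal n p)

/-- The fiberwise Euler operator `E = Σ ξᵢ ∂/∂ξᵢ` as an endomorphism. -/
noncomputable def Elin (n : ℕ) : Module.End ℂ (PolA n) :=
  ∑ i : Fin n,
    (LinearMap.mulLeft ℂ (X (Sum.inr i)) : Module.End ℂ (PolA n)) ∘ₗ
      (pderiv (Sum.inr i)).toLinearMap

/-- `E' = E + n/2` as an endomorphism. -/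
noncomputable def E'lin (n : ℕ) : Module.End ℂ (PolA n) :=
  Elin n + ((n : ℂ) / 2) • 1

/-- `D` as an endomorphism. -/
noncomputable def Dlin (n : ℕ) : Module.End ℂ (PolA n) :=
  ∑ i : Fin n,
    ((pderiv (Sum.inl i)).toLinearMap : Module.End ℂ (PolA n)) ∘ₗ
      (pderiv (Sum.inr i)).toLinearMap

/-- `L^{(m)} = −(1/16)(ξ_m∘D − 2E'∘∂/∂u_m)∘D`. -/
noncomputable def Lop (n : ℕ) (m : Fin n) : Module.End ℂ (PolA n) :=
  (-(1 / 16 : ℂ)) •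
    (((LinearMap.mulLeft ℂ (X (Sum.inr m)) : Module.End ℂ (PolA n)) ∘ₗ Dlin n
        - (2 : ℂ) • (E'lin n ∘ₗ (pderiv (Sum.inl m)).toLinearMap)) ∘ₗ Dlin n)

end LO

/-!
If `Dφ = Dψ = 0`, then `bh_d` kills `φ` and `ψ` for every `d > 0`, so `C_p(φ,ψ)` collapses to
`∑_{k+m=p} bg_m(N_k(φ,ψ))`. If moreover, for each `i`, either `∂φ/∂ξᵢ = 0` or `∂ψ/∂uᵢ = 0`, then
every summand of `N_k(φ,ψ)` with `k > 0` has a vanishing factor, and only `bg_p(φψ)` survives.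
-/

namespace LO

lemma pderiv_eq_zero_of_forall_mem_support {σ R : Type*} [CommSemiring R] {v : σ}
    {φ : MvPolynomial σ R} (h : ∀ d ∈ φ.support, d v = 0) : pderiv v φ = 0 := by
  refine pderiv_eq_zero_of_notMem_vars fun hv => ?_
  obtain ⟨d, hd, hvd⟩ := (mem_vars_iff_mem_support v).mp hv
  exact Finsupp.mem_support_iff.mp hvd (h d hd)

lemma pderiv_pderiv_comm {σ R : Type*} [CommSemiring R] (v w : σ) (φ : MvPolynomial σ R) :
    pderiv v (pderiv w φ) = pderiv w (pderiv v φ) := by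
  obtain rfl | hvw := eq_or_ne v w
  · rfl
  · ext d
    simp only [coeff_pderiv, Finsupp.add_apply, Finsupp.single_eq_of_ne hvw,
      Finsupp.single_eq_of_ne hvw.symm, add_zero, add_right_comm d, mul_right_comm]

lemma foldr_eq_zero_or_foldr_eq_zero {ι M N : Type*} [Zero M] [Zero N]
    {f : ι → M → M} {g : ι → N → N} (hf : ∀ i, f i 0 = 0) (hg : ∀ i, g i 0 = 0)
    {x : M} {y : N} (hxy : ∀ i, f i x = 0 ∨ g i y = 0) {l : List ι} (hl : l ≠ []) :
    l.foldr f x = 0 ∨ l.foldr g y = 0 := by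
  rw [← List.dropLast_append_getLast hl, List.foldr_append, List.foldr_append]
  refine (hxy (l.getLast hl)).imp (fun hx => ?_) fun hy => ?_
  · simp only [List.foldr_cons, List.foldr_nil, hx, List.foldr_fixed' hf]
  · simp only [List.foldr_cons, List.foldr_nil, hy, List.foldr_fixed' hg]

section Operators

variable {n : ℕ} {φ ψ : PolA n}

lemma cE_zero (c : ℕ → ℂ) : cE c (0 : PolA n) = 0 := by
  simp [cE]

lemma cE_one (φ : PolA n) : cE (fun _ => 1) φ = φ := by
  simp only [cE, one_mul, support_sum_monomial_coeff]

lemma Dop_zero : Dop (0 : PolA n) = 0 := by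
  simp [Dop]

lemma Dop_eq_zero_of_pderiv_inl (h : ∀ i, pderiv (Sum.inl i) φ = 0) : Dop φ = 0 :=
  Finset.sum_eq_zero fun i _ => by rw [pderiv_pderiv_comm, h, map_zero]

lemma Dop_eq_zero_of_pderiv_inr (h : ∀ i, pderiv (Sum.inr i) φ = 0) : Dop φ = 0 :=
  Finset.sum_eq_zero fun i _ => by rw [h, map_zero]

lemma bg_map_zero (lam : ℂ) (d : ℕ) : bg lam d (0 : PolA n) = 0 := by
  rw [bg, Function.iterate_fixed Dop_zero, cE_zero]

lemma bh_zero (lam : ℂ) (φ : PolA n) : bh lam 0 φ = φ := by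
  have hScal_zero : hScal n lam 0 = fun _ => 1 := by
    funext m
    simp [hScal]
  rw [bh, hScal_zero, cE_one, Function.iterate_zero_apply]

lemma bh_eq_zero_of_Dop_eq_zero (lam : ℂ) {d : ℕ} (hd : d ≠ 0) (hφ : Dop φ = 0) :
    bh lam d φ = 0 := by
  obtain ⟨e, rfl⟩ := Nat.exists_eq_succ_of_ne_zero hd
  rw [bh, Function.iterate_succ_apply, hφ, Function.iterate_fixed Dop_zero, cE_zero]

lemma Nop_zero (φ ψ : PolA n) : Nop 0 φ ψ = φ * ψ := by
  simp [Nop]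

lemma Nop_zero_left (k : ℕ) (ψ : PolA n) : Nop k 0 ψ = 0 := by
  simp [Nop, List.foldr_fixed']

lemma Nop_zero_right (k : ℕ) (φ : PolA n) : Nop k φ 0 = 0 := by
  simp [Nop, List.foldr_fixed']

lemma Nop_eq_zero_of_pderiv {k : ℕ} (hk : k ≠ 0)
    (h : ∀ i, pderiv (Sum.inr i) φ = 0 ∨ pderiv (Sum.inl i) ψ = 0) : Nop k φ ψ = 0 := by
  rw [Nop, Finset.sum_eq_zero, smul_zero]
  intro α _
  have hα : List.ofFn α ≠ [] := by rwa [Ne, List.ofFn_eq_nil_iff]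
  exact mul_eq_zero.mpr <| foldr_eq_zero_or_foldr_eq_zero
    (fun i => map_zero (pderiv (Sum.inr i))) (fun i => map_zero (pderiv (Sum.inl i))) h hα

lemma C_eq_sum_antidiagonal (lam : ℂ) (p : ℕ) (hφ : Dop φ = 0) (hψ : Dop ψ = 0) :
    C n lam p φ ψ = ∑ km ∈ Finset.HasAntidiagonal.antidiagonal p, bg lam km.2 (Nop km.1 φ ψ) := by
  have zero_mem_range : (0 : ℕ) ∈ Finset.range (p + 1) := by simp
  rw [C, Finset.sum_eq_single_of_mem 0 zero_mem_range, Finset.sum_eq_single_of_mem 0 zero_mem_range]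
  · have antidiagonal_eq_filter : Finset.HasAntidiagonal.antidiagonal p =
        {km ∈ Finset.range (p + 1) ×ˢ Finset.range (p + 1) | km.1 + km.2 = p} := by
      ext km
      simp only [Finset.HasAntidiagonal.mem_antidiagonal, Finset.mem_filter,
        Finset.mem_product, Finset.mem_range]
      omega
    simp only [antidiagonal_eq_filter, Finset.sum_filter, Finset.sum_product, bh_zero, zero_add]
  · intro j _ hj
    simp only [bh_eq_zero_of_Dop_eq_zero lam hj hψ, Nop_zero_right, bg_map_zero, ite_self,
      Finset.sum_const_zero]
  · intro i _ hi
    simp only [bh_eq_zero_of_Dop_eq_zero lam hi hφ, Nop_zero_left, bg_map_zero, ite_self,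
      Finset.sum_const_zero]

end Operators

end LO

theorem stmt_0_general {n : ℕ} (lam : ℂ) (p : ℕ) {φ ψ : PolA n}
    (hφ : LO.Dop φ = 0) (hψ : LO.Dop ψ = 0)
    (h : ∀ i, pderiv (Sum.inr i) φ = 0 ∨ pderiv (Sum.inl i) ψ = 0) :
    LO.C n lam p φ ψ = LO.bg lam p (φ * ψ) := by
  have zero_p_mem : (0, p) ∈ Finset.HasAntidiagonal.antidiagonal p := by simp
  rw [LO.C_eq_sum_antidiagonal lam p hφ hψ, Finset.sum_eq_single_of_mem _ zero_p_mem,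
    LO.Nop_zero]
  intro ⟨k, m⟩ hkm hne
  have hk : k ≠ 0 := by
    rintro rfl
    exact hne (by simpa using hkm)
  rw [LO.Nop_eq_zero_of_pderiv hk h, LO.bg_map_zero]

/-- on pairs `(φ,ψ)` with `φ ∈ ℂ[u]` and `ψ ∈ ℂ[ξ]`, one has
`C^λ_p(φ,ψ) = g^λ_p(E)(D^p(φψ)) = bg^λ_p(φψ)`. -/
theorem stmt_0 (n : ℕ) (hn : 1 ≤ n) (lam : ℂ) (p : ℕ) (hp : 1 ≤ p)
    (φ ψ : PolA n)
    (hφ : ∀ d ∈ φ.support, ∀ i : Fin n, d (Sum.inr i) = 0)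
    (hψ : ∀ d ∈ ψ.support, ∀ i : Fin n, d (Sum.inl i) = 0) :
    LO.C n lam p φ ψ = LO.bg lam p (φ * ψ) := by
  have hξφ (i) := LO.pderiv_eq_zero_of_forall_mem_support fun d hd => hφ d hd i
  have huψ (i) := LO.pderiv_eq_zero_of_forall_mem_support fun d hd => hψ d hd i
  exact stmt_0_general lam p (LO.Dop_eq_zero_of_pderiv_inr hξφ)
    (LO.Dop_eq_zero_of_pderiv_inl huψ) fun i => .inl (hξφ i)
end

section
/- For every λ ∈ ℂ and every p ≥ 1, one has Σ_{d=0}^{p} bh^λ_d ∘ bg^λ_{p−d} = 0 and Σ_{d=0}^{p} bg^λ_d ∘ bh^λ_{p−d} = 0 as ℂ-linear operators on A; that is, the formal operator series bg_λ = Σ_{d≥0} bg^λ_d t^d is the two-sided inverse of bh_λ = Σ_{d≥0} bh^λ_d t^d. -/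
open MvPolynomial

/-!
In `End(A)`, `D ∘ c(E) = c(E + 1) ∘ D`, so a product of two series `Σ c_d(E) D^d t^d` is again of
that form and `bg_λ · bh_λ = 1` becomes an identity between scalars. With `a = m + λ(n + 1)` and
`x = 2m + n`, its `d`-th summand is, up to a factor independent of `d`,
`(-1)^d (p choose d) (x + 1 + d)_{p-1}`; the sum vanishes as the `p`-th finite difference of a
polynomial of degree `p - 1`. Since `bh_λ` has constant term `1`, it is a unit of the
noncommutative ring `End(A)⟦t⟧`, so its left inverse `bg_λ` is also a right inverse.
-/

namespace LO

open Finset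

theorem sum_antidiagonal_neg_one_pow_choose_mul_eval_add_eq_zero {R : Type*} [CommRing R]
    {P : Polynomial R} {p : ℕ} (hP : P.natDegree < p) (y : R) :
    ∑ i ∈ antidiagonal p, (-1) ^ i.1 * (p.choose i.1 : R) * P.eval (y + i.1) = 0 := by
  have hΔ := congrFun (Polynomial.fwdDiff_iter_eq_zero_of_degree_lt hP) y
  rw [fwdDiff_iter_eq_sum_shift, Pi.zero_apply, ← Nat.sum_antidiagonal_eq_sum_range_succ
    (fun i j ↦ ((-1 : ℤ) ^ j * p.choose i) • P.eval (y + i • 1))] at hΔ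
  rw [← mul_zero ((-1) ^ p), ← hΔ, mul_sum]
  refine sum_congr rfl fun ⟨i, j⟩ hij ↦ ?_
  have hsign : (-1 : R) ^ p * (-1) ^ j = (-1) ^ i := by
    rw [← mem_antidiagonal.mp hij, pow_add, mul_assoc, ← mul_pow, neg_one_mul, neg_neg, one_pow,
      mul_one]
  simp only [zsmul_eq_mul, nsmul_eq_mul, mul_one]
  push_cast
  rw [← hsign]
  ring

theorem ascPochhammer_eval_add {R : Type*} [CommSemiring R] (x : R) (j k : ℕ) :
    (ascPochhammer R (j + k)).eval x =
      (ascPochhammer R j).eval x * (ascPochhammer R k).eval (x + j) := by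
  simp [← ascPochhammer_mul, Polynomial.eval_comp]

theorem ascPochhammer_eval_eq_prod_range {R : Type*} [CommSemiring R] (x : R) (k : ℕ) :
    (ascPochhammer R k).eval x = ∏ j ∈ range k, (x + j) := by
  induction k with
  | zero => simp
  | succ k ih => rw [ascPochhammer_succ_eval, ih, prod_range_succ]

section Scalars

variable {K : Type*} [Field K]

/-- The scalar `(a)_d / (d! (x + d)_d)`, with `(a)_d` the rising factorial. It is `h^λ_d(m)` for
`a = m + λ(n + 1)` and `x = 2m + n`; the shift `m ↦ m + 1` is `a ↦ a + 1`, `x ↦ x + 2`. -/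
noncomputable def hCoeff (a x : K) (d : ℕ) : K :=
  (ascPochhammer K d).eval a / (d.factorial * (ascPochhammer K d).eval (x + d))

/-- The scalar `(-1)^d (a)_d / (d! (x + 1)_d)`, which is `g^λ_d(m)` for the same `a` and `x` as
in `hCoeff`. -/
noncomputable def gCoeff (a x : K) (d : ℕ) : K :=
  (-1) ^ d * (ascPochhammer K d).eval a / (d.factorial * (ascPochhammer K d).eval (x + 1))

theorem gCoeff_mul_hCoeff [CharZero K] {a x : K} {q d k : ℕ} (hdk : d + k = q + 1)
    (hx : (ascPochhammer K (2 * q + 1)).eval (x + 1) ≠ 0) :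
    gCoeff a x d * hCoeff (a + d) (x + 2 * d) k =
      (ascPochhammer K (q + 1)).eval a /
          ((q + 1).factorial * (ascPochhammer K (2 * q + 1)).eval (x + 1)) *
        ((-1) ^ d * ((q + 1).choose d : K) * (ascPochhammer K q).eval (x + 1 + d)) := by
  have hnum : (ascPochhammer K (q + 1)).eval a =
      (ascPochhammer K d).eval a * (ascPochhammer K k).eval (a + d) := by
    rw [← hdk, ascPochhammer_eval_add]
  have hden : (ascPochhammer K (2 * q + 1)).eval (x + 1) =
      (ascPochhammer K d).eval (x + 1) * (ascPochhammer K q).eval (x + 1 + d) *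
        (ascPochhammer K k).eval (x + 2 * d + k) := by
    have hbase : x + 2 * d + k = x + 1 + (d + q : ℕ) := by
      have : (d : K) + k = q + 1 := mod_cast hdk
      push_cast
      linear_combination this
    rw [hbase, ← ascPochhammer_eval_add, ← ascPochhammer_eval_add]
    congr 2
    omega
  have hchoose : ((q + 1).choose d : K) = (q + 1).factorial / (d.factorial * k.factorial) := by
    rw [← hdk, Nat.cast_add_choose]
  rw [hden, mul_ne_zero_iff, mul_ne_zero_iff] at hx
  obtain ⟨⟨-, hx₂⟩, -⟩ := hx
  have hfact : ((q + 1).factorial : K) ≠ 0 := mod_cast (q + 1).factorial_ne_zero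
  rw [gCoeff, hCoeff, hnum, hden, hchoose]
  field_simp

theorem sum_antidiagonal_gCoeff_mul_hCoeff_eq_zero [CharZero K] (a : K) {x : K} {q : ℕ}
    (hx : (ascPochhammer K (2 * q + 1)).eval (x + 1) ≠ 0) :
    ∑ i ∈ antidiagonal (q + 1), gCoeff a x i.1 * hCoeff (a + i.1) (x + 2 * i.1) i.2 = 0 := by
  rw [sum_congr rfl fun i hi ↦ gCoeff_mul_hCoeff (mem_antidiagonal.mp hi) hx, ← mul_sum,
    sum_antidiagonal_neg_one_pow_choose_mul_eval_add_eq_zero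
      (by rw [ascPochhammer_natDegree]; exact q.lt_succ_self), mul_zero]

end Scalars

theorem hScal_eq_hCoeff (n : ℕ) (lam : ℂ) (d m : ℕ) :
    hScal n lam d m = hCoeff (m + lam * (n + 1)) (2 * m + n) d := by
  rw [hScal, hCoeff, ascPochhammer_eval_eq_prod_range, ascPochhammer_eval_eq_prod_range,
    mul_comm (d.factorial : ℂ), ← div_div, ← prod_div_distrib, inv_mul_eq_div]
  exact congrArg (· / _) (prod_congr rfl fun j _ ↦ by ring)

theorem gScal_eq_gCoeff (n : ℕ) (lam : ℂ) (d m : ℕ) :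
    gScal n lam d m = gCoeff (m + lam * (n + 1)) (2 * m + n) d := by
  have hsign : (-1 : ℂ) ^ d = ∏ j ∈ range d, -1 := by rw [prod_const, card_range]
  rw [gScal, gCoeff, ascPochhammer_eval_eq_prod_range, ascPochhammer_eval_eq_prod_range, hsign,
    ← prod_mul_distrib, mul_comm (d.factorial : ℂ), ← div_div, ← prod_div_distrib, inv_mul_eq_div]
  exact congrArg (· / _) (prod_congr rfl fun j _ ↦ by ring)

theorem sum_antidiagonal_gScal_mul_hScal (n : ℕ) (lam : ℂ) (p m : ℕ) :
    ∑ i ∈ antidiagonal p, gScal n lam i.1 m * hScal n lam i.2 (m + i.1) =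
      if p = 0 then 1 else 0 := by
  rcases p with _ | q
  · simp [gScal, hScal]
  have hden : (ascPochhammer ℂ (2 * q + 1)).eval (2 * m + n + 1 : ℂ) ≠ 0 := by
    rw [ascPochhammer_eval_eq_prod_range, prod_ne_zero_iff]
    intro j _
    norm_cast
    omega
  rw [if_neg q.succ_ne_zero,
    ← sum_antidiagonal_gCoeff_mul_hCoeff_eq_zero (m + lam * (n + 1)) hden]
  refine sum_congr rfl fun i _ ↦ ?_
  rw [gScal_eq_gCoeff, hScal_eq_hCoeff]
  congr 2 <;> push_cast <;> ring

section Operators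

variable {n : ℕ}

theorem coeff_cE (c : ℕ → ℂ) (φ : PolA n) (e : (Fin n ⊕ Fin n) →₀ ℕ) :
    coeff e (cE c φ) = c (xiDeg e) * coeff e φ := by
  simp +contextual [cE, coeff_sum, coeff_monomial]

/-- The functional calculus `c ↦ c(E)` of the fiberwise Euler operator, with `c(E)` realised by
`cE c`. -/
noncomputable def eulerCalculus (n : ℕ) : (ℕ → ℂ) →ₐ[ℂ] Module.End ℂ (PolA n) where
  toFun c :=
    { toFun := cE c
      map_add' := fun φ ψ ↦ by ext e; simp only [coeff_cE, coeff_add, mul_add]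
      map_smul' := fun r φ ↦ by
        ext e; simp only [coeff_cE, coeff_smul, smul_eq_mul, RingHom.id_apply]; ring }
  map_one' := LinearMap.ext fun φ ↦ by ext e; simp [coeff_cE]
  map_mul' a b := LinearMap.ext fun φ ↦ by ext e; simp [coeff_cE, mul_assoc]
  map_zero' := LinearMap.ext fun φ ↦ by ext e; simp [coeff_cE]
  map_add' a b := LinearMap.ext fun φ ↦ by ext e; simp [coeff_cE, add_mul]
  commutes' r := LinearMap.ext fun φ ↦ by
    ext e; simp [coeff_cE, Module.algebraMap_end_apply]

theorem eulerCalculus_apply (c : ℕ → ℂ) (φ : PolA n) : eulerCalculus n c φ = cE c φ := rfl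

theorem Dlin_apply (φ : PolA n) : Dlin n φ = Dop φ := by
  simp [Dlin, Dop]

theorem Dlin_pow_apply (d : ℕ) (φ : PolA n) : (Dlin n ^ d) φ = Dop^[d] φ := by
  rw [Module.End.pow_apply, funext Dlin_apply]

theorem xiDeg_add_single_inl_add_single_inr (e : (Fin n ⊕ Fin n) →₀ ℕ) (i : Fin n) :
    xiDeg (e + Finsupp.single (Sum.inl i) 1 + Finsupp.single (Sum.inr i) 1) = xiDeg e + 1 := by
  simp [xiDeg, sum_add_distrib, Finsupp.single_apply]

theorem Dop_cE (c : ℕ → ℂ) (φ : PolA n) : Dop (cE c φ) = cE (fun m ↦ c (m + 1)) (Dop φ) := by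
  ext e
  simp only [Dop, coeff_sum, coeff_pderiv, coeff_cE, xiDeg_add_single_inl_add_single_inr, mul_sum,
    mul_assoc]

theorem Dlin_pow_mul_eulerCalculus (c : ℕ → ℂ) (d : ℕ) :
    Dlin n ^ d * eulerCalculus n c = eulerCalculus n (fun m ↦ c (m + d)) * Dlin n ^ d := by
  induction d generalizing c with
  | zero => simp
  | succ d ih =>
    have hD : Dlin n * eulerCalculus n c = eulerCalculus n (fun m ↦ c (m + 1)) * Dlin n :=
      LinearMap.ext fun φ ↦ by
        simp only [Module.End.mul_apply, Dlin_apply, eulerCalculus_apply, Dop_cE]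
    rw [pow_succ, mul_assoc, hD, ← mul_assoc, ih, mul_assoc]
    simp only [add_assoc]

/-- The formal operator series `Σ c_d(E) ∘ D^d t^d` with coefficients in `End(A)`; it is `bh_λ` for
`c = hScal n lam` and `bg_λ` for `c = gScal n lam`. -/
noncomputable def opSeries (n : ℕ) (c : ℕ → ℕ → ℂ) : PowerSeries (Module.End ℂ (PolA n)) :=
  PowerSeries.mk fun d ↦ eulerCalculus n (c d) * Dlin n ^ d

theorem coeff_opSeries_mul_opSeries_apply (a b : ℕ → ℕ → ℂ) (p : ℕ) (φ : PolA n) :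
    PowerSeries.coeff p (opSeries n a * opSeries n b) φ =
      ∑ d ∈ range (p + 1), cE (a d) (Dop^[d] (cE (b (p - d)) (Dop^[p - d] φ))) := by
  rw [PowerSeries.coeff_mul, LinearMap.sum_apply, ← Nat.sum_antidiagonal_eq_sum_range_succ
    (fun i j ↦ cE (a i) (Dop^[i] (cE (b j) (Dop^[j] φ))))]
  simp only [opSeries, PowerSeries.coeff_mk, Module.End.mul_apply, eulerCalculus_apply,
    Dlin_pow_apply]

theorem opSeries_mul_opSeries (a b : ℕ → ℕ → ℂ) :
    opSeries n a * opSeries n b =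
      opSeries n fun p m ↦ ∑ i ∈ antidiagonal p, a i.1 m * b i.2 (m + i.1) := by
  ext1 p
  simp only [opSeries, PowerSeries.coeff_mul, PowerSeries.coeff_mk]
  have hsum : (fun m ↦ ∑ i ∈ antidiagonal p, a i.1 m * b i.2 (m + i.1)) =
      ∑ i ∈ antidiagonal p, a i.1 * fun m ↦ b i.2 (m + i.1) := by
    ext m
    simp only [Finset.sum_apply, Pi.mul_apply]
  rw [hsum, map_sum, sum_mul]
  refine sum_congr rfl fun i hi ↦ ?_
  rw [map_mul, ← mem_antidiagonal.mp hi, pow_add, mul_assoc, ← mul_assoc (Dlin n ^ i.1),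
    Dlin_pow_mul_eulerCalculus]
  simp only [mul_assoc]

theorem opSeries_ite_eq_one : opSeries n (fun p _ ↦ if p = 0 then 1 else 0) = 1 := by
  ext1 p
  rw [opSeries, PowerSeries.coeff_mk, PowerSeries.coeff_one]
  split_ifs with hp
  · change eulerCalculus n 1 * _ = 1
    rw [hp, pow_zero, mul_one, map_one]
  · change eulerCalculus n 0 * _ = 0
    rw [map_zero, zero_mul]

theorem opSeries_gScal_mul_opSeries_hScal (lam : ℂ) :
    opSeries n (gScal n lam) * opSeries n (hScal n lam) = 1 := by
  simp only [opSeries_mul_opSeries, sum_antidiagonal_gScal_mul_hScal, opSeries_ite_eq_one]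

theorem isUnit_opSeries_hScal (lam : ℂ) : IsUnit (opSeries n (hScal n lam)) := by
  have h₀ : hScal n lam 0 = 1 := funext fun m ↦ by simp [hScal]
  rw [PowerSeries.isUnit_iff_constantCoeff, ← PowerSeries.coeff_zero_eq_constantCoeff_apply,
    opSeries, PowerSeries.coeff_mk, h₀, map_one, pow_zero, mul_one]
  exact isUnit_one

theorem opSeries_hScal_mul_opSeries_gScal (lam : ℂ) :
    opSeries n (hScal n lam) * opSeries n (gScal n lam) = 1 := by
  obtain ⟨u, hu⟩ := isUnit_opSeries_hScal (n := n) lam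
  have hinv := opSeries_gScal_mul_opSeries_hScal (n := n) lam
  rw [← hu] at hinv ⊢
  rw [Units.eq_inv_of_mul_eq_one_right hinv, Units.mul_inv]

end Operators

end LO

/-- the formal series `bg_λ = Σ bg^λ_d t^d` is a two-sided inverse of
`bh_λ = Σ bh^λ_d t^d`: for every `p ≥ 1`, `Σ_{d=0}^p bh^λ_d ∘ bg^λ_{p-d} = 0` and
`Σ_{d=0}^p bg^λ_d ∘ bh^λ_{p-d} = 0` as operators on `A`. -/
theorem stmt_1 (n : ℕ) (hn : 1 ≤ n) (lam : ℂ) (p : ℕ) (hp : 1 ≤ p) :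
    (∀ φ : PolA n, ∑ d ∈ Finset.range (p + 1), LO.bh lam d (LO.bg lam (p - d) φ) = 0) ∧
    (∀ φ : PolA n, ∑ d ∈ Finset.range (p + 1), LO.bg lam d (LO.bh lam (p - d) φ) = 0) := by
  have hcoeff (φ : PolA n) :
      PowerSeries.coeff p (1 : PowerSeries (Module.End ℂ (PolA n))) φ = 0 := by
    rw [PowerSeries.coeff_one, if_neg (Nat.one_le_iff_ne_zero.mp hp), LinearMap.zero_apply]
  constructor <;> intro φ
  · rw [← hcoeff φ, ← LO.opSeries_hScal_mul_opSeries_gScal lam,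
      LO.coeff_opSeries_mul_opSeries_apply]
    rfl
  · rw [← hcoeff φ, ← LO.opSeries_gScal_mul_opSeries_hScal lam,
      LO.coeff_opSeries_mul_opSeries_apply]
    rfl
end

section
/- For all integers n ≥ 1, d ≥ 1 and m ≥ 0, the scalar h^{1/2}_d(m) admits the simplified factorization (1/d!) ∏_{j=0}^{d−1} (m + j + (n+1)/2)/(2m + j + n + d) = (1/(2^d d!)) · (∏_{i=1}^{⌊d/2⌋} (m + n/2 + i − 1/2)) / (∏_{i=⌊(d+1)/2⌋}^{d−1} (m + n/2 + i)), where empty products equal 1 (this is the identity h_d = U_d V_d^{−1} used for λ = 1/2, in which ⌊(d+1)/2⌋ of the original factors cancel). -/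
open MvPolynomial

/-!
With `x = m + n/2`, the denominators of `h^{1/2}_d(m)` are the `2x + k` for `d ≤ k < 2d`. The even
`k = 2i` give `2(x + i)` with `⌊(d+1)/2⌋ ≤ i < d`, and the odd `k = 2i + 1` give
`2(x + i + 1/2)` with `⌊d/2⌋ ≤ i < d`. The odd ones cancel against the numerators
`x + i + 1/2`, `0 ≤ i < d`, of which only those with `i < ⌊d/2⌋` survive.
-/

theorem prod_Ico_eq_prod_even_mul_prod_odd {M : Type*} [CommMonoid M] (f : ℕ → M) (a b : ℕ) :
    ∏ k ∈ Finset.Ico a b, f k =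
      (∏ i ∈ Finset.Ico ((a + 1) / 2) ((b + 1) / 2), f (2 * i)) *
        ∏ i ∈ Finset.Ico (a / 2) (b / 2), f (2 * i + 1) := by
  rcases le_total b a with hba | hab
  · rw [Finset.Ico_eq_empty_of_le hba, Finset.Ico_eq_empty_of_le (by omega),
      Finset.Ico_eq_empty_of_le (by omega)]
    simp
  induction b, hab using Nat.le_induction with
  | base => simp
  | succ b hab ih =>
    rw [Finset.prod_Ico_succ_top hab, ih]
    rcases Nat.even_or_odd' b with ⟨c, rfl | rfl⟩
    · rw [show (2 * c + 1 + 1) / 2 = c + 1 by omega, show (2 * c + 1) / 2 = c by omega,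
        show 2 * c / 2 = c by omega, Finset.prod_Ico_succ_top (by omega), mul_right_comm]
    · rw [show (2 * c + 1 + 1 + 1) / 2 = c + 1 by omega,
        show (2 * c + 1 + 1) / 2 = c + 1 by omega, show (2 * c + 1) / 2 = c by omega,
        Finset.prod_Ico_succ_top (a := a / 2) (by omega), mul_assoc]

section Field

variable {K : Type*} [Field K] [NeZero (2 : K)]

theorem prod_range_two_mul_add_add (x : K) (d : ℕ) :
    ∏ j ∈ Finset.range d, (2 * x + j + d) =
      2 ^ d * (∏ i ∈ Finset.Ico ((d + 1) / 2) d, (x + i)) *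
        ∏ i ∈ Finset.Ico (d / 2) d, (x + i + 1 / 2) := by
  have factor_even (i : ℕ) : 2 * x + ((2 * i : ℕ) : K) = 2 * (x + i) := by
    push_cast
    ring
  have factor_odd (i : ℕ) : 2 * x + ((2 * i + 1 : ℕ) : K) = 2 * (x + i + 1 / 2) := by
    push_cast
    field
  have card_add : (d - (d + 1) / 2) + (d - d / 2) = d := by omega
  calc ∏ j ∈ Finset.range d, (2 * x + j + d)
      = ∏ k ∈ Finset.Ico d (2 * d), (2 * x + k) := by
        rw [Finset.prod_Ico_eq_prod_range, show 2 * d - d = d by omega]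
        refine Finset.prod_congr rfl fun j _ => ?_
        push_cast
        ring
    _ = (∏ i ∈ Finset.Ico ((d + 1) / 2) d, 2 * (x + i)) *
          ∏ i ∈ Finset.Ico (d / 2) d, 2 * (x + i + 1 / 2) := by
        rw [prod_Ico_eq_prod_even_mul_prod_odd, show (2 * d + 1) / 2 = d by omega,
          show 2 * d / 2 = d by omega]
        simp only [factor_even, factor_odd]
    _ = _ := by
        simp only [Finset.prod_mul_distrib, Finset.prod_const, Nat.card_Ico]
        rw [mul_mul_mul_comm, ← pow_add, card_add, mul_assoc]

theorem prod_range_add_half_div (x : K) (d : ℕ) (hx : ∀ j < d, 2 * x + j + d ≠ 0) :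
    ∏ j ∈ Finset.range d, (x + j + 1 / 2) / (2 * x + j + d) =
      (2 ^ d)⁻¹ * (∏ i ∈ Finset.range (d / 2), (x + i + 1 / 2)) /
        ∏ i ∈ Finset.Ico ((d + 1) / 2) d, (x + i) := by
  have denom_ne_zero : ∏ j ∈ Finset.range d, (2 * x + j + d) ≠ 0 :=
    Finset.prod_ne_zero_iff.2 fun j hj => hx j (Finset.mem_range.1 hj)
  rw [prod_range_two_mul_add_add] at denom_ne_zero
  have common_ne_zero := right_ne_zero_of_mul denom_ne_zero
  rw [Finset.prod_div_distrib, prod_range_two_mul_add_add,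
    ← Finset.prod_range_mul_prod_Ico _ (Nat.div_le_self d 2),
    mul_div_mul_right _ _ common_ne_zero, div_mul_eq_div_div, div_eq_inv_mul _ (2 ^ d)]

theorem stmt_8_general (n m : K) (d : ℕ) (hd : 1 ≤ d)
    (hdenom : ∀ j < d, 2 * m + j + n + d ≠ 0) :
    (d.factorial : K)⁻¹ *
        ∏ j ∈ Finset.range d, (m + j + 1 / 2 * (n + 1)) / (2 * m + j + n + d) =
      (2 ^ d * (d.factorial : K))⁻¹ * (∏ i ∈ Finset.Icc 1 (d / 2), (m + n / 2 + i - 1 / 2)) /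
        ∏ i ∈ Finset.Icc ((d + 1) / 2) (d - 1), (m + n / 2 + i) := by
  have numerator_eq (j : ℕ) : m + j + 1 / 2 * (n + 1) = m + n / 2 + j + 1 / 2 := by ring
  have denominator_eq (j : ℕ) : 2 * m + j + n + d = 2 * (m + n / 2) + j + d := by
    field
  have shift_index : ∏ i ∈ Finset.Icc 1 (d / 2), (m + n / 2 + i - 1 / 2) =
      ∏ i ∈ Finset.range (d / 2), (m + n / 2 + i + 1 / 2) := by
    rw [← Finset.Ico_add_one_right_eq_Icc, Finset.prod_Ico_eq_prod_range, Nat.add_sub_cancel]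
    refine Finset.prod_congr rfl fun i _ => ?_
    push_cast
    field
  simp only [denominator_eq] at hdenom
  simp only [numerator_eq, denominator_eq]
  rw [prod_range_add_half_div _ _ hdenom, shift_index, ← Finset.Ico_add_one_right_eq_Icc,
    Nat.sub_add_cancel hd]
  ring

end Field

/-- the simplification `h^{1/2}_d = U_d V_d⁻¹`:
`(1/d!) ∏_{j=0}^{d−1} (m + j + (n+1)/2)/(2m + j + n + d)
  = (1/(2^d d!)) (∏_{i=1}^{⌊d/2⌋} (m + n/2 + i − 1/2)) / (∏_{i=⌊(d+1)/2⌋}^{d−1} (m + n/2 + i))`. -/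
theorem stmt_8 (n d m : ℕ) (hn : 1 ≤ n) (hd : 1 ≤ d) :
    LO.hScal n (1 / 2) d m =
      ((2 : ℂ) ^ d * (d.factorial : ℂ))⁻¹ *
        (∏ i ∈ Finset.Icc 1 (d / 2), ((m : ℂ) + (n : ℂ) / 2 + (i : ℂ) - 1 / 2)) /
        (∏ i ∈ Finset.Icc ((d + 1) / 2) (d - 1), ((m : ℂ) + (n : ℂ) / 2 + (i : ℂ))) :=
  stmt_8_general (n : ℂ) m d hd fun j _ => by norm_cast; omega
end
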